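/- arXiv:2402.08861 — 9 statements merged into one kernel-verified Lean document; each statement's English description precedes it below -/
import Mathlib

section
/- For any two distinct indices i, j ∈ {1,2,3,4}, setting h_σ(i,j) := ⁅e_σ(i,j), f_σ(i,j)⁆, the elements (e_σ(i,j), h_σ(i,j), f_σ(i,j)) form an sl₂-triple; that is, ⁅h_σ(i,j), e_σ(i,j)⁆ = 2 • e_σ(i,j) and ⁅h_σ(i,j), f_σ(i,j)⁆ = (-2) • f_σ(i,j). -/
/-!
The element `K = K i j` rotates the planes spanned by `e i, e j` and by `f i, f j`. Over a ring with
a square root `s` of `-1` such a rotation has the eigenvectors `u ± s • v`, so that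
`e i + s • e j` and `f i - s • f j` have weights `2 * s` and `-2 * s` under `K`, besides their
weights `2` and `-2` under `h`. As `⁅eσ, fσ⁆ = ⅟2 • (h - s • K)` and `s * s = -1`, the element
`⁅eσ, fσ⁆` averages two equal weights, `2` on `eσ` and `-2` on `fσ`.
-/

section SquareRootOfNegOne

variable {R L M : Type*} [CommRing R] [LieRing L] [LieAlgebra R L]
  [AddCommGroup M] [Module R M] [LieRingModule L M] [LieModule R L M] {s : R}

lemma lie_add_smul_of_rotation (hs : s * s = -1) {x : L} {u v : M} {c : R}
    (hu : ⁅x, u⁆ = -(c • v)) (hv : ⁅x, v⁆ = c • u) :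
    ⁅x, u + s • v⁆ = (c * s) • (u + s • v) := by
  rw [lie_add, lie_smul, hu, hv]
  match_scalars
  · linear_combination -c * hs
  · ring

lemma lie_add_smul_of_skew {ι : Type*} (hs : s * s = -1) {K : ι → ι → L} {u : ι → M} {c : R}
    (hKskew : ∀ i j, i ≠ j → K i j = -K j i) (hKu : ∀ i j, i ≠ j → ⁅K i j, u j⁆ = c • u i)
    {i j : ι} (hij : i ≠ j) :
    ⁅K i j, u i + s • u j⁆ = (c * s) • (u i + s • u j) := by
  have lie_K_u : ⁅K i j, u i⁆ = -(c • u j) := by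
    rw [hKskew i j hij, neg_lie, hKu j i hij.symm]
  exact lie_add_smul_of_rotation hs lie_K_u (hKu i j hij)

lemma lie_add_smul_sub_smul (hs : s * s = -1) {h k e₁ e₂ f₁ f₂ : L}
    (h₁₁ : ⁅e₁, f₁⁆ = h) (h₂₂ : ⁅e₂, f₂⁆ = h) (h₁₂ : ⁅e₁, f₂⁆ = k) (h₂₁ : ⁅e₂, f₁⁆ = -k) :
    ⁅e₁ + s • e₂, f₁ - s • f₂⁆ = (2 : R) • (h - s • k) := by
  simp only [add_lie, lie_sub, smul_lie, lie_smul, h₁₁, h₂₂, h₁₂, h₂₁]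
  match_scalars
  · linear_combination -hs
  · ring

lemma invOf_two_smul_sub_smul_lie [Invertible (2 : R)] (hs : s * s = -1) {x y : L} {m : M} {c : R}
    (hx : ⁅x, m⁆ = c • m) (hy : ⁅y, m⁆ = (c * s) • m) :
    ⁅⅟(2 : R) • (x - s • y), m⁆ = c • m := by
  calc ⁅⅟(2 : R) • (x - s • y), m⁆ = ⅟(2 : R) • (2 : R) • c • m := by
        rw [smul_lie, sub_lie, smul_lie, hx, hy]
        match_scalars
        linear_combination -(⅟(2 : R) * c) * hs
    _ = c • m := invOf_smul_smul _ _

end SquareRootOfNegOne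

theorem stmt0_general {ι R L : Type*} [CommRing R] [Invertible (2 : R)] [LieRing L]
    [LieAlgebra R L] {s : R} (hs : s * s = -1) {h : L} {e f : ι → L}
    (hhe : ∀ i, ⁅h, e i⁆ = (2 : R) • e i)
    (hhf : ∀ i, ⁅h, f i⁆ = (-2 : R) • f i)
    (hef : ∀ i, ⁅e i, f i⁆ = h)
    {K : ι → ι → L}
    (hKdef : ∀ i j, i ≠ j → K i j = ⁅e i, f j⁆)
    (hKskew : ∀ i j, i ≠ j → K i j = -K j i)
    (hKe : ∀ i j, i ≠ j → ⁅K i j, e j⁆ = (2 : R) • e i)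
    (hKf : ∀ i j, i ≠ j → ⁅K i j, f j⁆ = (2 : R) • f i)
    {eσ fσ : ι → ι → L}
    (heσ : ∀ i j, i ≠ j → eσ i j = ⅟(2 : R) • (e i + s • e j))
    (hfσ : ∀ i j, i ≠ j → fσ i j = ⅟(2 : R) • (f i - s • f j))
    {i j : ι} (hij : i ≠ j) :
    ⁅⁅eσ i j, fσ i j⁆, eσ i j⁆ = (2 : R) • eσ i j ∧
      ⁅⁅eσ i j, fσ i j⁆, fσ i j⁆ = (-2 : R) • fσ i j := by
  have lie_h_eσ : ⁅h, eσ i j⁆ = (2 : R) • eσ i j := by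
    simp only [heσ i j hij, lie_smul, lie_add, hhe]
    module
  have lie_h_fσ : ⁅h, fσ i j⁆ = (-2 : R) • fσ i j := by
    simp only [hfσ i j hij, lie_smul, lie_sub, hhf]
    module
  have lie_K_eσ : ⁅K i j, eσ i j⁆ = (2 * s) • eσ i j := by
    rw [heσ i j hij, lie_smul, lie_add_smul_of_skew hs hKskew hKe hij, smul_comm]
  have lie_K_fσ : ⁅K i j, fσ i j⁆ = (-2 * s) • fσ i j := by
    have hs' : -s * -s = -1 := by rw [neg_mul_neg, hs]
    rw [hfσ i j hij, sub_eq_add_neg, ← neg_smul, lie_smul,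
      lie_add_smul_of_skew hs' hKskew hKf hij, smul_comm, neg_mul_comm]
  have lie_eσ_fσ : ⁅eσ i j, fσ i j⁆ = ⅟(2 : R) • (h - s • K i j) := by
    have hK₂₁ : ⁅e j, f i⁆ = -K i j := by
      rw [← hKdef j i hij.symm, hKskew j i hij.symm]
    rw [heσ i j hij, hfσ i j hij, smul_lie, lie_smul,
      lie_add_smul_sub_smul hs (hef i) (hef j) (hKdef i j hij).symm hK₂₁, invOf_smul_smul]
  rw [lie_eσ_fσ]
  exact ⟨invOf_two_smul_sub_smul_lie hs lie_h_eσ lie_K_eσ,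
    invOf_two_smul_sub_smul_lie hs lie_h_fσ lie_K_fσ⟩

/-- CONTEXT: Lie algebra over ℂ with sl₂-triples (e i, h, f i), i ∈ {1,2,3,4}
(encoded as Fin 4), the operators K i j := ⁅e i, f j⁆ satisfying the Verbitsky
relations, and the classes e_σ(i,j), f_σ(i,j), e_σ̄(i,j), f_σ̄(i,j). -/
theorem stmt0 {L : Type*} [LieRing L] [LieAlgebra ℂ L]
    (h : L) (e f : Fin 4 → L)
    (hhe : ∀ i, ⁅h, e i⁆ = (2 : ℂ) • e i)
    (hhf : ∀ i, ⁅h, f i⁆ = (-2 : ℂ) • f i)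
    (hef : ∀ i, ⁅e i, f i⁆ = h)
    (K : Fin 4 → Fin 4 → L)
    (hKdef : ∀ i j, i ≠ j → K i j = ⁅e i, f j⁆)
    (hKskew : ∀ i j, i ≠ j → K i j = -K j i)
    (hKK : ∀ i j k, i ≠ j → j ≠ k → i ≠ k → ⁅K i j, K j k⁆ = (2 : ℂ) • K i k)
    (hKh : ∀ i j, i ≠ j → ⁅K i j, h⁆ = 0)
    (hKe : ∀ i j, i ≠ j → ⁅K i j, e j⁆ = (2 : ℂ) • e i)
    (hKf : ∀ i j, i ≠ j → ⁅K i j, f j⁆ = (2 : ℂ) • f i)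
    (hKe0 : ∀ i j k, i ≠ j → j ≠ k → i ≠ k → ⁅K i j, e k⁆ = 0)
    (hKf0 : ∀ i j k, i ≠ j → j ≠ k → i ≠ k → ⁅K i j, f k⁆ = 0)
    (eσ fσ eσc fσc : Fin 4 → Fin 4 → L)
    (heσ : ∀ i j, i ≠ j → eσ i j = ((1 : ℂ)/2) • (e i + Complex.I • e j))
    (hfσ : ∀ i j, i ≠ j → fσ i j = ((1 : ℂ)/2) • (f i - Complex.I • f j))
    (heσc : ∀ i j, i ≠ j → eσc i j = ((1 : ℂ)/2) • (e i - Complex.I • e j))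
    (hfσc : ∀ i j, i ≠ j → fσc i j = ((1 : ℂ)/2) • (f i + Complex.I • f j)) :
    ∀ i j : Fin 4, i ≠ j →
      ⁅⁅eσ i j, fσ i j⁆, eσ i j⁆ = (2 : ℂ) • eσ i j ∧
      ⁅⁅eσ i j, fσ i j⁆, fσ i j⁆ = (-2 : ℂ) • fσ i j := by
  let _ : Invertible (2 : ℂ) := invertibleOfNonzero two_ne_zero
  simp only [one_div, ← invOf_eq_inv] at heσ hfσ
  exact fun _ _ ↦ stmt0_general Complex.I_mul_I hhe hhf hef hKdef hKskew hKe hKf heσ hfσ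
end

section
/- For any two distinct indices i, j ∈ {1,2,3,4}, setting h_σ̄(i,j) := ⁅e_σ̄(i,j), f_σ̄(i,j)⁆, the elements (e_σ̄(i,j), h_σ̄(i,j), f_σ̄(i,j)) form an sl₂-triple; that is, ⁅h_σ̄(i,j), e_σ̄(i,j)⁆ = 2 • e_σ̄(i,j) and ⁅h_σ̄(i,j), f_σ̄(i,j)⁆ = (-2) • f_σ̄(i,j). -/
/-!
For `i ≠ j` and coordinate vectors `v = (a, b)`, `w = (c, d)` put `e_v = a • e i + b • e j` and
`f_w = c • f i + d • f j`, and let `⟨v, w⟩ = a * c + b * d` (bilinear, not Hermitian). Then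
`⁅e_v, f_w⁆` is `⟨v, w⟩ • h` plus a multiple of `⁅e i, f j⁆`, which acts on the `e_v` and on the
`f_w` as an infinitesimal rotation. Hence
`⁅⁅e_v, f_w⁆, e_v⁆ = 4⟨v, w⟩ e_v - 2⟨v, v⟩ e_w` and
`⁅⁅e_v, f_w⁆, f_w⁆ = 2⟨w, w⟩ f_v - 4⟨v, w⟩ f_w`.
For isotropic `v`, `w` with `2⟨v, w⟩ = 1` these are the `sl₂` relations, and
`v = (1, -I) / 2`, `w = (1, I) / 2` is such a pair.
-/

/-- A family of `sl₂`-triples `(e i, h, f i)` with common `h`, linked by those Verbitsky relations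
that involve only two indices. The operator `K i j` of the paper is written `⁅e i, f j⁆`, and `h` is
allowed to be zero, unlike in `IsSl2Triple`. -/
structure IsVerbitskyFamily (R : Type*) {ι L : Type*} [CommRing R] [LieRing L] [LieAlgebra R L]
    (h : L) (e f : ι → L) : Prop where
  lie_h_e : ∀ i, ⁅h, e i⁆ = (2 : R) • e i
  lie_h_f : ∀ i, ⁅h, f i⁆ = (-2 : R) • f i
  lie_e_f_self : ∀ i, ⁅e i, f i⁆ = h
  lie_e_f_skew : ∀ i j, i ≠ j → ⁅e i, f j⁆ = -⁅e j, f i⁆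
  lie_lie_e_right : ∀ i j, i ≠ j → ⁅⁅e i, f j⁆, e j⁆ = (2 : R) • e i
  lie_lie_f_right : ∀ i j, i ≠ j → ⁅⁅e i, f j⁆, f j⁆ = (2 : R) • f i

namespace IsVerbitskyFamily

variable {R ι L : Type*} [CommRing R] [LieRing L] [LieAlgebra R L] {h : L} {e f : ι → L} {i j : ι}

theorem of_operators {K : ι → ι → L}
    (lie_h_e : ∀ i, ⁅h, e i⁆ = (2 : R) • e i)
    (lie_h_f : ∀ i, ⁅h, f i⁆ = (-2 : R) • f i)
    (lie_e_f_self : ∀ i, ⁅e i, f i⁆ = h)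
    (K_eq_lie : ∀ i j, i ≠ j → K i j = ⁅e i, f j⁆)
    (K_skew : ∀ i j, i ≠ j → K i j = -K j i)
    (lie_K_e : ∀ i j, i ≠ j → ⁅K i j, e j⁆ = (2 : R) • e i)
    (lie_K_f : ∀ i j, i ≠ j → ⁅K i j, f j⁆ = (2 : R) • f i) :
    IsVerbitskyFamily R h e f where
  lie_h_e := lie_h_e
  lie_h_f := lie_h_f
  lie_e_f_self := lie_e_f_self
  lie_e_f_skew i j hij := by rw [← K_eq_lie i j hij, ← K_eq_lie j i hij.symm, K_skew i j hij]
  lie_lie_e_right i j hij := by rw [← K_eq_lie i j hij, lie_K_e i j hij]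
  lie_lie_f_right i j hij := by rw [← K_eq_lie i j hij, lie_K_f i j hij]

theorem lie_lie_e_left (hV : IsVerbitskyFamily R h e f) (hij : i ≠ j) :
    ⁅⁅e i, f j⁆, e i⁆ = (-2 : R) • e j := by
  rw [hV.lie_e_f_skew i j hij, neg_lie, hV.lie_lie_e_right j i hij.symm, neg_smul]

theorem lie_lie_f_left (hV : IsVerbitskyFamily R h e f) (hij : i ≠ j) :
    ⁅⁅e i, f j⁆, f i⁆ = (-2 : R) • f j := by
  rw [hV.lie_e_f_skew i j hij, neg_lie, hV.lie_lie_f_right j i hij.symm, neg_smul]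

theorem lie_e_f_smul_add_smul (hV : IsVerbitskyFamily R h e f) (hij : i ≠ j) (a b c d : R) :
    ⁅a • e i + b • e j, c • f i + d • f j⁆ =
      (a * c + b * d) • h + (a * d - b * c) • ⁅e i, f j⁆ := by
  simp only [add_lie, lie_add, smul_lie, lie_smul, hV.lie_e_f_self, hV.lie_e_f_skew j i hij.symm]
  module

theorem lie_lie_e_smul_add_smul (hV : IsVerbitskyFamily R h e f) (hij : i ≠ j) (a b c d : R) :
    ⁅⁅a • e i + b • e j, c • f i + d • f j⁆, a • e i + b • e j⁆ =
      (4 * (a * c + b * d)) • (a • e i + b • e j) -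
        (2 * (a ^ 2 + b ^ 2)) • (c • e i + d • e j) := by
  rw [hV.lie_e_f_smul_add_smul hij]
  simp only [add_lie, lie_add, smul_lie, lie_smul, hV.lie_h_e, hV.lie_lie_e_left hij,
    hV.lie_lie_e_right i j hij]
  module

theorem lie_lie_f_smul_add_smul (hV : IsVerbitskyFamily R h e f) (hij : i ≠ j) (a b c d : R) :
    ⁅⁅a • e i + b • e j, c • f i + d • f j⁆, c • f i + d • f j⁆ =
      (2 * (c ^ 2 + d ^ 2)) • (a • f i + b • f j) -
        (4 * (a * c + b * d)) • (c • f i + d • f j) := by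
  rw [hV.lie_e_f_smul_add_smul hij]
  simp only [add_lie, lie_add, smul_lie, lie_smul, hV.lie_h_f, hV.lie_lie_f_left hij,
    hV.lie_lie_f_right i j hij]
  module

theorem lie_lie_e_of_isotropic (hV : IsVerbitskyFamily R h e f) (hij : i ≠ j) {a b c d : R}
    (hab : a ^ 2 + b ^ 2 = 0) (habcd : 2 * (a * c + b * d) = 1) :
    ⁅⁅a • e i + b • e j, c • f i + d • f j⁆, a • e i + b • e j⁆ =
      (2 : R) • (a • e i + b • e j) := by
  have hpairing : 4 * (a * c + b * d) = 2 := by linear_combination 2 * habcd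
  rw [hV.lie_lie_e_smul_add_smul hij, hab, hpairing, mul_zero, zero_smul, sub_zero]

theorem lie_lie_f_of_isotropic (hV : IsVerbitskyFamily R h e f) (hij : i ≠ j) {a b c d : R}
    (hcd : c ^ 2 + d ^ 2 = 0) (habcd : 2 * (a * c + b * d) = 1) :
    ⁅⁅a • e i + b • e j, c • f i + d • f j⁆, c • f i + d • f j⁆ =
      (-2 : R) • (c • f i + d • f j) := by
  have hpairing : 4 * (a * c + b * d) = 2 := by linear_combination 2 * habcd
  rw [hV.lie_lie_f_smul_add_smul hij, hcd, hpairing, mul_zero, zero_smul, zero_sub, neg_smul]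

end IsVerbitskyFamily

theorem stmt1_general {R ι L : Type*} [CommRing R] [LieRing L] [LieAlgebra R L]
    {h : L} {e f : ι → L} (hV : IsVerbitskyFamily R h e f) {i j : ι} (hij : i ≠ j)
    {r s : R} (hr : 2 * r = 1) (hs : s ^ 2 = -1) :
    ⁅⁅r • (e i - s • e j), r • (f i + s • f j)⁆, r • (e i - s • e j)⁆ =
        (2 : R) • r • (e i - s • e j) ∧
      ⁅⁅r • (e i - s • e j), r • (f i + s • f j)⁆, r • (f i + s • f j)⁆ =
        (-2 : R) • r • (f i + s • f j) := by
  have he : r • (e i - s • e j) = r • e i + (-(r * s)) • e j := by module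
  have hf : r • (f i + s • f j) = r • f i + (r * s) • f j := by module
  have he_isotropic : r ^ 2 + (-(r * s)) ^ 2 = 0 := by linear_combination r ^ 2 * hs
  have hf_isotropic : r ^ 2 + (r * s) ^ 2 = 0 := by linear_combination r ^ 2 * hs
  have hpairing : 2 * (r * r + -(r * s) * (r * s)) = 1 := by
    linear_combination (2 * r + 1) * hr - 2 * r ^ 2 * hs
  rw [he, hf]
  exact ⟨hV.lie_lie_e_of_isotropic hij he_isotropic hpairing,
    hV.lie_lie_f_of_isotropic hij hf_isotropic hpairing⟩

/-- CONTEXT: Lie algebra over ℂ with sl₂-triples (e i, h, f i), i ∈ {1,2,3,4}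
(encoded as Fin 4), the operators K i j := ⁅e i, f j⁆ satisfying the Verbitsky
relations, and the classes e_σ(i,j), f_σ(i,j), e_σ̄(i,j), f_σ̄(i,j). -/
theorem stmt1 {L : Type*} [LieRing L] [LieAlgebra ℂ L]
    (h : L) (e f : Fin 4 → L)
    (hhe : ∀ i, ⁅h, e i⁆ = (2 : ℂ) • e i)
    (hhf : ∀ i, ⁅h, f i⁆ = (-2 : ℂ) • f i)
    (hef : ∀ i, ⁅e i, f i⁆ = h)
    (K : Fin 4 → Fin 4 → L)
    (hKdef : ∀ i j, i ≠ j → K i j = ⁅e i, f j⁆)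
    (hKskew : ∀ i j, i ≠ j → K i j = -K j i)
    (hKK : ∀ i j k, i ≠ j → j ≠ k → i ≠ k → ⁅K i j, K j k⁆ = (2 : ℂ) • K i k)
    (hKh : ∀ i j, i ≠ j → ⁅K i j, h⁆ = 0)
    (hKe : ∀ i j, i ≠ j → ⁅K i j, e j⁆ = (2 : ℂ) • e i)
    (hKf : ∀ i j, i ≠ j → ⁅K i j, f j⁆ = (2 : ℂ) • f i)
    (hKe0 : ∀ i j k, i ≠ j → j ≠ k → i ≠ k → ⁅K i j, e k⁆ = 0)
    (hKf0 : ∀ i j k, i ≠ j → j ≠ k → i ≠ k → ⁅K i j, f k⁆ = 0)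
    (eσ fσ eσc fσc : Fin 4 → Fin 4 → L)
    (heσ : ∀ i j, i ≠ j → eσ i j = ((1 : ℂ)/2) • (e i + Complex.I • e j))
    (hfσ : ∀ i j, i ≠ j → fσ i j = ((1 : ℂ)/2) • (f i - Complex.I • f j))
    (heσc : ∀ i j, i ≠ j → eσc i j = ((1 : ℂ)/2) • (e i - Complex.I • e j))
    (hfσc : ∀ i j, i ≠ j → fσc i j = ((1 : ℂ)/2) • (f i + Complex.I • f j)) :
    ∀ i j : Fin 4, i ≠ j →
      ⁅⁅eσc i j, fσc i j⁆, eσc i j⁆ = (2 : ℂ) • eσc i j ∧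
      ⁅⁅eσc i j, fσc i j⁆, fσc i j⁆ = (-2 : ℂ) • fσc i j := by
  intro i j hij
  rw [heσc i j hij, hfσc i j hij]
  exact stmt1_general (.of_operators hhe hhf hef hKdef hKskew hKe hKf) hij (by norm_num)
    Complex.I_sq
end

section
/- For any two distinct indices i, j ∈ {1,2,3,4}, one has ⁅e_σ(i,j), f_σ̄(i,j)⁆ = 0 and ⁅e_σ̄(i,j), f_σ(i,j)⁆ = 0. -/
section LieModule

variable {R L M : Type*} [CommRing R] [LieRing L] [LieAlgebra R L]
  [AddCommGroup M] [Module R M] [LieRingModule L M] [LieModule R L M]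

theorem lie_add_smul_eq_zero_of_sq_eq_neg_one {r : R} (hr : r ^ 2 = -1) {x₁ x₂ : L} {y₁ y₂ : M}
    (hdiag : ⁅x₁, y₁⁆ = ⁅x₂, y₂⁆) (hskew : ⁅x₁, y₂⁆ = -⁅x₂, y₁⁆) :
    ⁅x₁ + r • x₂, y₁ + r • y₂⁆ = 0 :=
  calc ⁅x₁ + r • x₂, y₁ + r • y₂⁆
    _ = (⁅x₁, y₁⁆ + r ^ 2 • ⁅x₂, y₂⁆) + r • (⁅x₁, y₂⁆ + ⁅x₂, y₁⁆) := by
      simp only [add_lie, lie_add, smul_lie, lie_smul]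
      module
    _ = 0 := by
      rw [hdiag, hskew, hr, neg_one_smul, add_neg_cancel, neg_add_cancel, smul_zero, add_zero]

theorem lie_sub_smul_eq_zero_of_sq_eq_neg_one {r : R} (hr : r ^ 2 = -1) {x₁ x₂ : L} {y₁ y₂ : M}
    (hdiag : ⁅x₁, y₁⁆ = ⁅x₂, y₂⁆) (hskew : ⁅x₁, y₂⁆ = -⁅x₂, y₁⁆) :
    ⁅x₁ - r • x₂, y₁ - r • y₂⁆ = 0 := by
  have hr' : (-r) ^ 2 = -1 := by rw [neg_sq, hr]
  simpa only [neg_smul, ← sub_eq_add_neg] using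
    lie_add_smul_eq_zero_of_sq_eq_neg_one hr' hdiag hskew

theorem stmt2_general {ι : Type*} {h : M} {e : ι → L} {f : ι → M} (hef : ∀ i, ⁅e i, f i⁆ = h)
    (hskew : ∀ i j, i ≠ j → ⁅e i, f j⁆ = -⁅e j, f i⁆) {r : R} (hr : r ^ 2 = -1) (c d : R)
    {i j : ι} (hij : i ≠ j) :
    ⁅c • (e i + r • e j), d • (f i + r • f j)⁆ = 0 ∧
      ⁅c • (e i - r • e j), d • (f i - r • f j)⁆ = 0 := by
  have hdiag : ⁅e i, f i⁆ = ⁅e j, f j⁆ := (hef i).trans (hef j).symm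
  constructor
  · rw [smul_lie, lie_smul, lie_add_smul_eq_zero_of_sq_eq_neg_one hr hdiag (hskew i j hij),
      smul_zero, smul_zero]
  · rw [smul_lie, lie_smul, lie_sub_smul_eq_zero_of_sq_eq_neg_one hr hdiag (hskew i j hij),
      smul_zero, smul_zero]

end LieModule

/-- CONTEXT: Lie algebra over ℂ with sl₂-triples (e i, h, f i), i ∈ {1,2,3,4}
(encoded as Fin 4), the operators K i j := ⁅e i, f j⁆ satisfying the Verbitsky
relations, and the classes e_σ(i,j), f_σ(i,j), e_σ̄(i,j), f_σ̄(i,j). -/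
theorem stmt2 {L : Type*} [LieRing L] [LieAlgebra ℂ L]
    (h : L) (e f : Fin 4 → L)
    (hhe : ∀ i, ⁅h, e i⁆ = (2 : ℂ) • e i)
    (hhf : ∀ i, ⁅h, f i⁆ = (-2 : ℂ) • f i)
    (hef : ∀ i, ⁅e i, f i⁆ = h)
    (K : Fin 4 → Fin 4 → L)
    (hKdef : ∀ i j, i ≠ j → K i j = ⁅e i, f j⁆)
    (hKskew : ∀ i j, i ≠ j → K i j = -K j i)
    (hKK : ∀ i j k, i ≠ j → j ≠ k → i ≠ k → ⁅K i j, K j k⁆ = (2 : ℂ) • K i k)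
    (hKh : ∀ i j, i ≠ j → ⁅K i j, h⁆ = 0)
    (hKe : ∀ i j, i ≠ j → ⁅K i j, e j⁆ = (2 : ℂ) • e i)
    (hKf : ∀ i j, i ≠ j → ⁅K i j, f j⁆ = (2 : ℂ) • f i)
    (hKe0 : ∀ i j k, i ≠ j → j ≠ k → i ≠ k → ⁅K i j, e k⁆ = 0)
    (hKf0 : ∀ i j k, i ≠ j → j ≠ k → i ≠ k → ⁅K i j, f k⁆ = 0)
    (eσ fσ eσc fσc : Fin 4 → Fin 4 → L)
    (heσ : ∀ i j, i ≠ j → eσ i j = ((1 : ℂ)/2) • (e i + Complex.I • e j))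
    (hfσ : ∀ i j, i ≠ j → fσ i j = ((1 : ℂ)/2) • (f i - Complex.I • f j))
    (heσc : ∀ i j, i ≠ j → eσc i j = ((1 : ℂ)/2) • (e i - Complex.I • e j))
    (hfσc : ∀ i j, i ≠ j → fσc i j = ((1 : ℂ)/2) • (f i + Complex.I • f j)) :
    ∀ i j : Fin 4, i ≠ j →
      ⁅eσ i j, fσc i j⁆ = 0 ∧ ⁅eσc i j, fσ i j⁆ = 0 := by
  intro i j hij
  rw [heσ i j hij, hfσ i j hij, heσc i j hij, hfσc i j hij]
  have hskew (k l) (hkl : k ≠ l) : ⁅e k, f l⁆ = -⁅e l, f k⁆ := by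
    rw [← hKdef k l hkl, ← hKdef l k hkl.symm, hKskew k l hkl]
  exact stmt2_general hef hskew Complex.I_sq _ _ hij
end

section
/- Set L₀ := ⁅e_σ(1,2), f_σ(3,4)⁆, Λ₀ := ⁅e_σ(3,4), f_σ(1,2)⁆, and H₀ := ⁅L₀, Λ₀⁆. Then (L₀, H₀, Λ₀) form an sl₂-triple; that is, ⁅H₀, L₀⁆ = 2 • L₀ and ⁅H₀, Λ₀⁆ = (-2) • Λ₀. -/
/-!
Up to the factor `1/4`, the Verbitsky relations turn `⁅e_σ(1,2), f_σ(3,4)⁆` and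
`⁅e_σ(3,4), f_σ(1,2)⁆` into `x + I y` and `-x + I y`, where `x = K₁₃ + K₂₄` and `y = K₄₁ + K₂₃`
lie in the image of one of the two ideals of `𝔰𝔬(4) = 𝔰𝔬(3) ⊕ 𝔰𝔬(3)`. That image is spanned by `x`,
`y` and `z = K₃₄ + K₂₁`, each of which is up to scale the bracket of the other two in cyclic order,
and `x + I y`, `-x + I y` are the ladder operators for `z`.
-/

/-- The relations of the standard basis of `𝔰𝔬(3)`, scaled so that the structure constant is `r`.
Linear independence is not required. -/
structure IsSo3Triple {R L : Type*} [CommRing R] [LieRing L] [LieAlgebra R L]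
    (r : R) (x y z : L) : Prop where
  lie_xy : ⁅x, y⁆ = r • z
  lie_yz : ⁅y, z⁆ = r • x
  lie_zx : ⁅z, x⁆ = r • y

/-- The relations between those generators of `𝔰𝔬(ι)` that share an index, in Verbitsky's
normalisation. The diagonal entries `K i i` are unconstrained. -/
structure IsRotationFamily (R : Type*) {L ι : Type*} [CommRing R] [LieRing L] [LieAlgebra R L]
    (K : ι → ι → L) : Prop where
  skew : ∀ i j, i ≠ j → K i j = -K j i
  lie_trans : ∀ i j k, i ≠ j → j ≠ k → i ≠ k → ⁅K i j, K j k⁆ = (2 : R) • K i k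

section

variable {R L ι : Type*} [CommRing R] [LieRing L] [LieAlgebra R L]

namespace IsSo3Triple

variable {r I : R} {x y z : L}

theorem smul (t : IsSo3Triple r x y z) (s : R) :
    IsSo3Triple (s * r) (s • x) (s • y) (s • z) where
  lie_xy := by rw [smul_lie, lie_smul, t.lie_xy]; module
  lie_yz := by rw [smul_lie, lie_smul, t.lie_yz]; module
  lie_zx := by rw [smul_lie, lie_smul, t.lie_zx]; module

theorem lie_raising_lowering (t : IsSo3Triple (1 : R) x y z) :
    ⁅x + I • y, -x + I • y⁆ = (2 * I) • z := by
  have lie_yx : ⁅y, x⁆ = -z := by rw [← lie_skew, t.lie_xy, one_smul]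
  simp only [add_lie, lie_add, lie_neg, smul_lie, lie_smul, lie_self, t.lie_xy, lie_yx]
  module

theorem lie_weight_raising (t : IsSo3Triple (1 : R) x y z) (hI : I ^ 2 = -1) :
    ⁅(2 * I) • z, x + I • y⁆ = (2 : R) • (x + I • y) := by
  have lie_zy : ⁅z, y⁆ = -x := by rw [← lie_skew, t.lie_yz, one_smul]
  simp only [lie_add, smul_lie, lie_smul, t.lie_zx, lie_zy]
  linear_combination (norm := module) (-2 : R) • hI • x

theorem lie_weight_lowering (t : IsSo3Triple (1 : R) x y z) (hI : I ^ 2 = -1) :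
    ⁅(2 * I) • z, -x + I • y⁆ = (-2 : R) • (-x + I • y) := by
  have lie_zy : ⁅z, y⁆ = -x := by rw [← lie_skew, t.lie_yz, one_smul]
  simp only [lie_add, lie_neg, smul_lie, lie_smul, t.lie_zx, lie_zy]
  linear_combination (norm := module) (-2 : R) • hI • x

end IsSo3Triple

namespace IsRotationFamily

variable {K : ι → ι → L} {i j k l : ι}

theorem lie_trans_symm (hK : IsRotationFamily R K) (hij : i ≠ j) (hjk : j ≠ k) (hik : i ≠ k) :
    ⁅K i j, K k i⁆ = (2 : R) • K j k := by
  rw [← lie_skew, hK.lie_trans k i j hik.symm hij hjk.symm, hK.skew j k hjk, smul_neg]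

theorem lie_same_left (hK : IsRotationFamily R K) (hij : i ≠ j) (hjk : j ≠ k) (hik : i ≠ k) :
    ⁅K i j, K i k⁆ = (2 : R) • K k j := by
  rw [hK.skew i k hik, lie_neg, hK.lie_trans_symm hij hjk hik, hK.skew k j hjk.symm, smul_neg]

theorem lie_same_right (hK : IsRotationFamily R K) (hij : i ≠ j) (hjk : j ≠ k) (hik : i ≠ k) :
    ⁅K i j, K k j⁆ = (2 : R) • K k i := by
  rw [hK.skew k j hjk.symm, lie_neg, hK.lie_trans i j k hij hjk hik, hK.skew k i hik.symm, smul_neg]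

theorem lie_add_add (hK : IsRotationFamily R K) (hd : [i, j, k, l].Nodup) :
    ⁅K i j + K l k, K k i + K l j⁆ = (4 : R) • (K j k + K l i) := by
  obtain ⟨⟨hij, hik, hil⟩, ⟨hjk, hjl⟩, hkl⟩ :
      (i ≠ j ∧ i ≠ k ∧ i ≠ l) ∧ (j ≠ k ∧ j ≠ l) ∧ k ≠ l := by simpa using hd
  rw [add_lie, lie_add, lie_add, hK.lie_trans_symm hij hjk hik, hK.lie_same_right hij hjl hil,
    hK.lie_trans l k i hkl.symm hik.symm hil.symm, hK.lie_same_left hkl.symm hjk.symm hjl.symm]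
  module

-- Rotating `i → k → j → i` permutes the three elements cyclically.
theorem isSo3Triple (hK : IsRotationFamily R K) (hd : [i, j, k, l].Nodup) :
    IsSo3Triple (4 : R) (K i j + K l k) (K k i + K l j) (K j k + K l i) where
  lie_xy := hK.lie_add_add hd
  lie_yz := hK.lie_add_add (by grind)
  lie_zx := hK.lie_add_add (by grind)

end IsRotationFamily

theorem lie_smul_add_smul_sub {I : R} (hI : I ^ 2 = -1) (c : R) (u v p q : L) :
    ⁅c • (u + I • v), c • (p - I • q)⁆ =
      c ^ 2 • (⁅u, p⁆ + ⁅v, q⁆ + I • (⁅v, p⁆ - ⁅u, q⁆)) := by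
  simp only [smul_lie, lie_smul, add_lie, lie_sub]
  linear_combination (norm := module) (-c ^ 2) • hI • ⁅v, q⁆

theorem stmt3_general {I c : R} (hI : I ^ 2 = -1) (hc : 2 * c = 1)
    {e f : ι → L} {K : ι → ι → L} (hKdef : ∀ i j, i ≠ j → K i j = ⁅e i, f j⁆)
    (hK : IsRotationFamily R K) {eσ fσ : ι → ι → L}
    (heσ : ∀ i j, i ≠ j → eσ i j = c • (e i + I • e j))
    (hfσ : ∀ i j, i ≠ j → fσ i j = c • (f i - I • f j))
    {i j k l : ι} (hd : [i, j, k, l].Nodup) :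
    ⁅⁅⁅eσ i j, fσ k l⁆, ⁅eσ k l, fσ i j⁆⁆, ⁅eσ i j, fσ k l⁆⁆ = (2 : R) • ⁅eσ i j, fσ k l⁆ ∧
      ⁅⁅⁅eσ i j, fσ k l⁆, ⁅eσ k l, fσ i j⁆⁆, ⁅eσ k l, fσ i j⁆⁆ =
        (-2 : R) • ⁅eσ k l, fσ i j⁆ := by
  obtain ⟨⟨hij, hik, hil⟩, ⟨hjk, hjl⟩, hkl⟩ :
      (i ≠ j ∧ i ≠ k ∧ i ≠ l) ∧ (j ≠ k ∧ j ≠ l) ∧ k ≠ l := by simpa using hd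
  have scale : c ^ 2 * 4 = 1 := by linear_combination (2 * c + 1) * hc
  have triple : IsSo3Triple (1 : R) (c ^ 2 • (K i k + K j l)) (c ^ 2 • (K l i + K j k))
      (c ^ 2 • (K k l + K j i)) := by
    have hd' : [i, k, l, j].Nodup := by grind
    exact scale ▸ (hK.isSo3Triple hd').smul (c ^ 2)
  have raising : ⁅eσ i j, fσ k l⁆ =
      c ^ 2 • (K i k + K j l) + I • c ^ 2 • (K l i + K j k) := by
    rw [heσ i j hij, hfσ k l hkl, lie_smul_add_smul_sub hI, ← hKdef i k hik, ← hKdef j l hjl,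
      ← hKdef j k hjk, ← hKdef i l hil, hK.skew i l hil]
    module
  have lowering : ⁅eσ k l, fσ i j⁆ =
      -(c ^ 2 • (K i k + K j l)) + I • c ^ 2 • (K l i + K j k) := by
    rw [heσ k l hkl, hfσ i j hij, lie_smul_add_smul_sub hI, ← hKdef k i hik.symm,
      ← hKdef l j hjl.symm, ← hKdef l i hil.symm, ← hKdef k j hjk.symm, hK.skew k i hik.symm,
      hK.skew l j hjl.symm, hK.skew k j hjk.symm]
    module
  rw [raising, lowering, triple.lie_raising_lowering]
  exact ⟨triple.lie_weight_raising hI, triple.lie_weight_lowering hI⟩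

end

/-- CONTEXT: Lie algebra over ℂ with sl₂-triples (e i, h, f i), i ∈ {1,2,3,4}
(encoded as Fin 4), the operators K i j := ⁅e i, f j⁆ satisfying the Verbitsky
relations, and the classes e_σ(i,j), f_σ(i,j), e_σ̄(i,j), f_σ̄(i,j). -/
theorem stmt3 {L : Type*} [LieRing L] [LieAlgebra ℂ L]
    (h : L) (e f : Fin 4 → L)
    (hhe : ∀ i, ⁅h, e i⁆ = (2 : ℂ) • e i)
    (hhf : ∀ i, ⁅h, f i⁆ = (-2 : ℂ) • f i)
    (hef : ∀ i, ⁅e i, f i⁆ = h)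
    (K : Fin 4 → Fin 4 → L)
    (hKdef : ∀ i j, i ≠ j → K i j = ⁅e i, f j⁆)
    (hKskew : ∀ i j, i ≠ j → K i j = -K j i)
    (hKK : ∀ i j k, i ≠ j → j ≠ k → i ≠ k → ⁅K i j, K j k⁆ = (2 : ℂ) • K i k)
    (hKh : ∀ i j, i ≠ j → ⁅K i j, h⁆ = 0)
    (hKe : ∀ i j, i ≠ j → ⁅K i j, e j⁆ = (2 : ℂ) • e i)
    (hKf : ∀ i j, i ≠ j → ⁅K i j, f j⁆ = (2 : ℂ) • f i)
    (hKe0 : ∀ i j k, i ≠ j → j ≠ k → i ≠ k → ⁅K i j, e k⁆ = 0)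
    (hKf0 : ∀ i j k, i ≠ j → j ≠ k → i ≠ k → ⁅K i j, f k⁆ = 0)
    (eσ fσ eσc fσc : Fin 4 → Fin 4 → L)
    (heσ : ∀ i j, i ≠ j → eσ i j = ((1 : ℂ)/2) • (e i + Complex.I • e j))
    (hfσ : ∀ i j, i ≠ j → fσ i j = ((1 : ℂ)/2) • (f i - Complex.I • f j))
    (heσc : ∀ i j, i ≠ j → eσc i j = ((1 : ℂ)/2) • (e i - Complex.I • e j))
    (hfσc : ∀ i j, i ≠ j → fσc i j = ((1 : ℂ)/2) • (f i + Complex.I • f j)) :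
    ⁅⁅⁅eσ 0 1, fσ 2 3⁆, ⁅eσ 2 3, fσ 0 1⁆⁆, ⁅eσ 0 1, fσ 2 3⁆⁆ =
        (2 : ℂ) • ⁅eσ 0 1, fσ 2 3⁆ ∧
      ⁅⁅⁅eσ 0 1, fσ 2 3⁆, ⁅eσ 2 3, fσ 0 1⁆⁆, ⁅eσ 2 3, fσ 0 1⁆⁆ =
        (-2 : ℂ) • ⁅eσ 2 3, fσ 0 1⁆ := by
  exact stmt3_general Complex.I_sq (by norm_num) hKdef ⟨hKskew, hKK⟩ heσ hfσ (by decide)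
end

section
/- One has ⁅e_σ(3,4), f_σ(1,2)⁆ = (1/4) • (-(K 1 3 + K 2 4) - I • (K 1 4 - K 2 3)). -/
/-!
Because `I ^ 2 = -1`, pairing `x + I y` with `m - I n` is like multiplying a complex number by a
conjugate: the real part is `⁅x, m⁆ + ⁅y, n⁆` and the imaginary part `⁅y, m⁆ - ⁅x, n⁆`. As the index
pairs `{3, 4}` and `{1, 2}` are disjoint, each of the four brackets is an off-diagonal `K`, and
skew-symmetry moves the smaller index to the front.
-/

section LieModule

variable {R L M : Type*} [CommRing R] [LieRing L] [LieAlgebra R L]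
  [AddCommGroup M] [Module R M] [LieRingModule L M] [LieModule R L M]

theorem add_smul_lie_sub_smul {c : R} (hc : c * c = -1) (x y : L) (m n : M) :
    ⁅x + c • y, m - c • n⁆ = (⁅x, m⁆ + ⁅y, n⁆) - c • (⁅x, n⁆ - ⁅y, m⁆) := by
  calc ⁅x + c • y, m - c • n⁆
      = ⁅x, m⁆ - c • ⁅x, n⁆ + c • ⁅y, m⁆ - (c * c) • ⁅y, n⁆ := by
        simp only [add_lie, lie_sub, smul_lie, lie_smul]
        module
    _ = (⁅x, m⁆ + ⁅y, n⁆) - c • (⁅x, n⁆ - ⁅y, m⁆) := by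
        rw [hc]
        module

theorem stmt5_general {ι : Type*} {c : R} (hc : c * c = -1) (r : R) (e : ι → L) (f : ι → M)
    (K : ι → ι → M) (hKdef : ∀ i j, i ≠ j → K i j = ⁅e i, f j⁆)
    (hKskew : ∀ i j, i ≠ j → K i j = -K j i)
    {i j k l : ι} (hik : i ≠ k) (hil : i ≠ l) (hjk : j ≠ k) (hjl : j ≠ l) :
    ⁅r • (e k + c • e l), r • (f i - c • f j)⁆ =
      (r * r) • (-(K i k + K j l) - c • (K i l - K j k)) := by
  have lie_eq_neg {a b : ι} (hab : a ≠ b) : ⁅e b, f a⁆ = -K a b := by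
    rw [← hKdef b a hab.symm, hKskew b a hab.symm]
  rw [smul_lie, lie_smul, smul_smul, add_smul_lie_sub_smul hc, lie_eq_neg hik, lie_eq_neg hil,
    lie_eq_neg hjk, lie_eq_neg hjl]
  module

end LieModule

/-- CONTEXT: Lie algebra over ℂ with sl₂-triples (e i, h, f i), i ∈ {1,2,3,4}
(encoded as Fin 4), the operators K i j := ⁅e i, f j⁆ satisfying the Verbitsky
relations, and the classes e_σ(i,j), f_σ(i,j), e_σ̄(i,j), f_σ̄(i,j). -/
theorem stmt5 {L : Type*} [LieRing L] [LieAlgebra ℂ L]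
    (h : L) (e f : Fin 4 → L)
    (hhe : ∀ i, ⁅h, e i⁆ = (2 : ℂ) • e i)
    (hhf : ∀ i, ⁅h, f i⁆ = (-2 : ℂ) • f i)
    (hef : ∀ i, ⁅e i, f i⁆ = h)
    (K : Fin 4 → Fin 4 → L)
    (hKdef : ∀ i j, i ≠ j → K i j = ⁅e i, f j⁆)
    (hKskew : ∀ i j, i ≠ j → K i j = -K j i)
    (hKK : ∀ i j k, i ≠ j → j ≠ k → i ≠ k → ⁅K i j, K j k⁆ = (2 : ℂ) • K i k)
    (hKh : ∀ i j, i ≠ j → ⁅K i j, h⁆ = 0)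
    (hKe : ∀ i j, i ≠ j → ⁅K i j, e j⁆ = (2 : ℂ) • e i)
    (hKf : ∀ i j, i ≠ j → ⁅K i j, f j⁆ = (2 : ℂ) • f i)
    (hKe0 : ∀ i j k, i ≠ j → j ≠ k → i ≠ k → ⁅K i j, e k⁆ = 0)
    (hKf0 : ∀ i j k, i ≠ j → j ≠ k → i ≠ k → ⁅K i j, f k⁆ = 0)
    (eσ fσ eσc fσc : Fin 4 → Fin 4 → L)
    (heσ : ∀ i j, i ≠ j → eσ i j = ((1 : ℂ)/2) • (e i + Complex.I • e j))
    (hfσ : ∀ i j, i ≠ j → fσ i j = ((1 : ℂ)/2) • (f i - Complex.I • f j))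
    (heσc : ∀ i j, i ≠ j → eσc i j = ((1 : ℂ)/2) • (e i - Complex.I • e j))
    (hfσc : ∀ i j, i ≠ j → fσc i j = ((1 : ℂ)/2) • (f i + Complex.I • f j)) :
    ⁅eσ 2 3, fσ 0 1⁆ = ((1 : ℂ)/4) • (-(K 0 2 + K 1 3) - Complex.I • (K 0 3 - K 1 2)) := by
  rw [heσ 2 3 (by decide), hfσ 0 1 (by decide), show (1 / 4 : ℂ) = 1 / 2 * (1 / 2) by norm_num]
  exact stmt5_general Complex.I_mul_I _ e f K hKdef hKskew
    (by decide) (by decide) (by decide) (by decide)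
end

section
/- Set L₀ := ⁅e_σ(1,2), f_σ(3,4)⁆ and Λ₀ := ⁅e_σ(3,4), f_σ(1,2)⁆. Then ⁅L₀, Λ₀⁆ = (-(I/2)) • (K 1 2 - K 3 4). -/
/-!
In `so(4) ≅ so(3) ⊕ so(3)`, with standard generators `K i j`, the elements `X = K a c + K b d`,
`Y = K b c - K a d` and `Z = K a b - K c d` form a basis of one of the two summands, and
`⁅X, Y⁆ = -4 Z`. Up to the factor `1/4`, the operators `L₀` and `Λ₀` are `X + iY` and `-X + iY`, so
their bracket is a multiple of `⁅X, Y⁆`.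
-/

section Rotation

variable {ι L : Type*} [LieRing L]

/-- The relations of the standard generators of an orthogonal Lie algebra with overlapping indices,
rescaled so that the structure constant is `2`; this captures the Verbitsky relations among the
`K i j`. Diagonal entries `K i i` are unconstrained. -/
structure IsRotationFamily_s6 (K : ι → ι → L) : Prop where
  skew : ∀ i j, i ≠ j → K i j = -K j i
  lie_eq : ∀ i j k, i ≠ j → j ≠ k → i ≠ k → ⁅K i j, K j k⁆ = 2 • K i k

namespace IsRotationFamily_s6

variable {K : ι → ι → L}

lemma lie_common_right (hK : IsRotationFamily_s6 K) {i j k : ι} (hij : i ≠ j) (hjk : j ≠ k)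
    (hik : i ≠ k) : ⁅K i j, K k j⁆ = -(2 • K i k) := by
  rw [hK.skew k j hjk.symm, lie_neg, hK.lie_eq i j k hij hjk hik]

lemma lie_common_left (hK : IsRotationFamily_s6 K) {i j k : ι} (hij : i ≠ j) (hjk : j ≠ k)
    (hik : i ≠ k) : ⁅K j i, K j k⁆ = -(2 • K i k) := by
  rw [hK.skew j i hij.symm, neg_lie, hK.lie_eq i j k hij hjk hik]

lemma lie_add_sub (hK : IsRotationFamily_s6 K) {a b c d : ι} (hab : a ≠ b) (hac : a ≠ c)
    (had : a ≠ d) (hbc : b ≠ c) (hbd : b ≠ d) (hcd : c ≠ d) :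
    ⁅K a c + K b d, K b c - K a d⁆ = -(4 • (K a b - K c d)) := by
  rw [add_lie, lie_sub, lie_sub, hK.lie_common_right hac hbc.symm hab,
    hK.lie_common_left hac.symm had hcd, hK.lie_common_left hbd.symm hbc hcd.symm,
    hK.lie_common_right hbd had.symm hab.symm, hK.skew d c hcd.symm, hK.skew b a hab.symm]
  module

end IsRotationFamily_s6

end Rotation

section SigmaClass

variable {R ι L : Type*} [CommRing R] [LieRing L] [LieAlgebra R L]

lemma lie_add_smul_neg_add_smul (r : R) (x y : L) :
    ⁅x + r • y, -x + r • y⁆ = (2 * r) • ⁅x, y⁆ := by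
  simp only [add_lie, lie_add, lie_neg, lie_smul, smul_lie, lie_self, ← lie_skew x y]
  module

variable [Invertible (2 : R)]

/-- The class `(x i + ζ x j) / 2`. For a square root `ζ` of `-1`, `sigmaClass ζ e` and
`sigmaClass (-ζ) f` are the `e_σ` and `f_σ` of the paper; replacing `ζ` by `-ζ` gives
`e_σ̄` and `f_σ̄`. -/
def sigmaClass (ζ : R) (x : ι → L) (i j : ι) : L :=
  (⅟2 : R) • (x i + ζ • x j)

lemma lie_sigmaClass_neg {ζ : R} (hζ : ζ * ζ = -1) (e f : ι → L) (a b c d : ι) :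
    ⁅sigmaClass ζ e a b, sigmaClass (-ζ) f c d⁆ = (⅟2 * ⅟2 : R) •
      ((⁅e a, f c⁆ + ⁅e b, f d⁆) + ζ • (⁅e b, f c⁆ - ⁅e a, f d⁆)) := by
  simp only [sigmaClass, lie_smul, smul_lie, add_lie, lie_add]
  linear_combination (norm := module) (-(⅟2 * ⅟2 : R)) • (hζ • ⁅e b, f d⁆)

theorem stmt6_general {ζ : R} (hζ : ζ * ζ = -1) {e f : ι → L} {K : ι → ι → L}
    (hKdef : ∀ i j, i ≠ j → K i j = ⁅e i, f j⁆) (hK : IsRotationFamily_s6 K) {a b c d : ι}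
    (hab : a ≠ b) (hac : a ≠ c) (had : a ≠ d) (hbc : b ≠ c) (hbd : b ≠ d) (hcd : c ≠ d) :
    ⁅⁅sigmaClass ζ e a b, sigmaClass (-ζ) f c d⁆,
      ⁅sigmaClass ζ e c d, sigmaClass (-ζ) f a b⁆⁆ = (-(ζ * ⅟2)) • (K a b - K c d) := by
  have hL : ⁅sigmaClass ζ e a b, sigmaClass (-ζ) f c d⁆ =
      (⅟2 * ⅟2 : R) • ((K a c + K b d) + ζ • (K b c - K a d)) := by
    rw [lie_sigmaClass_neg hζ, hKdef a c hac, hKdef b d hbd, hKdef b c hbc, hKdef a d had]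
  have hΛ : ⁅sigmaClass ζ e c d, sigmaClass (-ζ) f a b⁆ =
      (⅟2 * ⅟2 : R) • (-(K a c + K b d) + ζ • (K b c - K a d)) := by
    rw [lie_sigmaClass_neg hζ, hK.skew a c hac, hK.skew b d hbd, hK.skew b c hbc, hK.skew a d had,
      hKdef c a hac.symm, hKdef d b hbd.symm, hKdef c b hbc.symm, hKdef d a had.symm]
    module
  -- `8 q⁴ - q = q (2 q - 1) (4 q² + 2 q + 1)` vanishes at `q = ⅟2`.
  have hcoeff : (⅟2 * ⅟2 * (⅟2 * ⅟2) * (2 * ζ) * 4 : R) = ζ * ⅟2 := by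
    linear_combination (ζ * ⅟2 * (4 * ⅟2 * ⅟2 + 2 * ⅟2 + 1)) * invOf_mul_self (2 : R)
  rw [hL, hΛ, smul_lie, lie_smul, lie_add_smul_neg_add_smul,
    hK.lie_add_sub hab hac had hbc hbd hcd, ← hcoeff]
  module

end SigmaClass

/-- CONTEXT: Lie algebra over ℂ with sl₂-triples (e i, h, f i), i ∈ {1,2,3,4}
(encoded as Fin 4), the operators K i j := ⁅e i, f j⁆ satisfying the Verbitsky
relations, and the classes e_σ(i,j), f_σ(i,j), e_σ̄(i,j), f_σ̄(i,j). -/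
theorem stmt6 {L : Type*} [LieRing L] [LieAlgebra ℂ L]
    (h : L) (e f : Fin 4 → L)
    (hhe : ∀ i, ⁅h, e i⁆ = (2 : ℂ) • e i)
    (hhf : ∀ i, ⁅h, f i⁆ = (-2 : ℂ) • f i)
    (hef : ∀ i, ⁅e i, f i⁆ = h)
    (K : Fin 4 → Fin 4 → L)
    (hKdef : ∀ i j, i ≠ j → K i j = ⁅e i, f j⁆)
    (hKskew : ∀ i j, i ≠ j → K i j = -K j i)
    (hKK : ∀ i j k, i ≠ j → j ≠ k → i ≠ k → ⁅K i j, K j k⁆ = (2 : ℂ) • K i k)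
    (hKh : ∀ i j, i ≠ j → ⁅K i j, h⁆ = 0)
    (hKe : ∀ i j, i ≠ j → ⁅K i j, e j⁆ = (2 : ℂ) • e i)
    (hKf : ∀ i j, i ≠ j → ⁅K i j, f j⁆ = (2 : ℂ) • f i)
    (hKe0 : ∀ i j k, i ≠ j → j ≠ k → i ≠ k → ⁅K i j, e k⁆ = 0)
    (hKf0 : ∀ i j k, i ≠ j → j ≠ k → i ≠ k → ⁅K i j, f k⁆ = 0)
    (eσ fσ eσc fσc : Fin 4 → Fin 4 → L)
    (heσ : ∀ i j, i ≠ j → eσ i j = ((1 : ℂ)/2) • (e i + Complex.I • e j))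
    (hfσ : ∀ i j, i ≠ j → fσ i j = ((1 : ℂ)/2) • (f i - Complex.I • f j))
    (heσc : ∀ i j, i ≠ j → eσc i j = ((1 : ℂ)/2) • (e i - Complex.I • e j))
    (hfσc : ∀ i j, i ≠ j → fσc i j = ((1 : ℂ)/2) • (f i + Complex.I • f j)) :
    ⁅⁅eσ 0 1, fσ 2 3⁆, ⁅eσ 2 3, fσ 0 1⁆⁆ = (-(Complex.I/2)) • (K 0 1 - K 2 3) := by
  have hK : IsRotationFamily_s6 K :=
    ⟨hKskew, fun i j k hij hjk hik ↦ by rw [hKK i j k hij hjk hik, ofNat_smul_eq_nsmul]⟩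
  simpa [sigmaClass, heσ, hfσ, div_eq_mul_inv, ← sub_eq_add_neg] using
    stmt6_general Complex.I_mul_I hKdef hK (a := 0) (b := 1) (c := 2) (d := 3)
      (by decide) (by decide) (by decide) (by decide) (by decide) (by decide)
end

section
/- For any three distinct indices i, j, k ∈ {1,2,3,4}, one has ⁅e_σ(j,k), ⁅f_σ(j,k), eᵢ⁆⁆ = eᵢ. -/
/-! On `e i` the operators `ad (e p) ∘ ad (f q)`, `p, q ∈ {j, k}`, act as the scalars `2 δ_pq`.
Hence `ad e_σ ∘ ad f_σ` multiplies `e i` by twice the dot product of the coefficient vectors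
`(1/2, I/2)` of `e_σ` and `(1/2, -I/2)` of `f_σ`, and this dot product is `1/2`. -/

theorem lie_sum_smul_lie_sum_smul {R L M κ : Type*} [CommRing R] [LieRing L] [LieAlgebra R L]
    [AddCommGroup M] [Module R M] [LieRingModule L M] [LieModule R L M]
    [Fintype κ] [DecidableEq κ] {x y : κ → L} {m n : M}
    (hxy : ∀ p q, ⁅x p, ⁅y q, m⁆⁆ = if p = q then n else 0) (a b : κ → R) :
    ⁅∑ p, a p • x p, ⁅∑ q, b q • y q, m⁆⁆ = (a ⬝ᵥ b) • n := by
  calc ⁅∑ p, a p • x p, ⁅∑ q, b q • y q, m⁆⁆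
      = ∑ p, ∑ q, a p • b q • ⁅x p, ⁅y q, m⁆⁆ := by
        simp only [sum_lie _ _ m, sum_lie_sum, smul_lie]
        simp only [lie_smul]
    _ = ∑ p, a p • b p • n := by simp [hxy]
    _ = (a ⬝ᵥ b) • n := by simp only [dotProduct, Finset.sum_smul, mul_smul]

section Verbitsky

variable {R L ι : Type*} [CommRing R] [LieRing L] [LieAlgebra R L] {e f : ι → L} {K : ι → ι → L}

theorem lie_e_lie_f_e_eq_ite [DecidableEq ι]
    (hKdef : ∀ i j, i ≠ j → K i j = ⁅e i, f j⁆)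
    (hKe : ∀ i j, i ≠ j → ⁅K i j, e j⁆ = (2 : R) • e i)
    (hKe0 : ∀ i j k, i ≠ j → j ≠ k → i ≠ k → ⁅K i j, e k⁆ = 0)
    {i p q : ι} (hip : i ≠ p) (hiq : i ≠ q) :
    ⁅e p, ⁅f q, e i⁆⁆ = if p = q then (2 : R) • e i else 0 := by
  have eq_lie_K : ⁅e p, ⁅f q, e i⁆⁆ = ⁅K i q, e p⁆ := by
    rw [← lie_skew (f q), ← hKdef i q hiq, lie_neg, lie_skew]
  rw [eq_lie_K]
  split_ifs with hpq
  · rw [hpq, hKe i q hiq]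
  · exact hKe0 i q p hiq (Ne.symm hpq) hip

theorem stmt10_general
    (hKdef : ∀ i j, i ≠ j → K i j = ⁅e i, f j⁆)
    (hKe : ∀ i j, i ≠ j → ⁅K i j, e j⁆ = (2 : R) • e i)
    (hKe0 : ∀ i j k, i ≠ j → j ≠ k → i ≠ k → ⁅K i j, e k⁆ = 0)
    {t I : R} (ht : 2 * t = 1) (hI : I * I = -1) {eσ fσ : ι → ι → L}
    (heσ : ∀ i j, i ≠ j → eσ i j = t • (e i + I • e j))
    (hfσ : ∀ i j, i ≠ j → fσ i j = t • (f i - I • f j))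
    {i j k : ι} (hij : i ≠ j) (hjk : j ≠ k) (hik : i ≠ k) :
    ⁅eσ j k, ⁅fσ j k, e i⁆⁆ = e i := by
  classical
  have dual_on_e : ∀ p q : Fin 2, ⁅![e j, e k] p, ⁅![f j, f k] q, e i⁆⁆ =
      if p = q then (2 : R) • e i else 0 := by
    simp [Fin.forall_fin_two, lie_e_lie_f_e_eq_ite hKdef hKe hKe0, hij, hik, hjk, hjk.symm]
  have eσ_eq_sum : eσ j k = ∑ p, ![t, t * I] p • ![e j, e k] p := by
    simp [heσ j k hjk, mul_smul]
  have fσ_eq_sum : fσ j k = ∑ q, ![t, -(t * I)] q • ![f j, f k] q := by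
    simp [hfσ j k hjk, mul_smul, sub_eq_add_neg]
  have dotProduct_mul_two : (![t, t * I] ⬝ᵥ ![t, -(t * I)]) * 2 = 1 := by
    rw [Matrix.vec2_dotProduct']
    linear_combination (1 + 2 * t) * ht - 2 * t ^ 2 * hI
  rw [eσ_eq_sum, fσ_eq_sum, lie_sum_smul_lie_sum_smul dual_on_e, smul_smul,
    dotProduct_mul_two, one_smul]

end Verbitsky

/-- CONTEXT: Lie algebra over ℂ with sl₂-triples (e i, h, f i), i ∈ {1,2,3,4}
(encoded as Fin 4), the operators K i j := ⁅e i, f j⁆ satisfying the Verbitsky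
relations, and the classes e_σ(i,j), f_σ(i,j), e_σ̄(i,j), f_σ̄(i,j). -/
theorem stmt10 {L : Type*} [LieRing L] [LieAlgebra ℂ L]
    (h : L) (e f : Fin 4 → L)
    (hhe : ∀ i, ⁅h, e i⁆ = (2 : ℂ) • e i)
    (hhf : ∀ i, ⁅h, f i⁆ = (-2 : ℂ) • f i)
    (hef : ∀ i, ⁅e i, f i⁆ = h)
    (K : Fin 4 → Fin 4 → L)
    (hKdef : ∀ i j, i ≠ j → K i j = ⁅e i, f j⁆)
    (hKskew : ∀ i j, i ≠ j → K i j = -K j i)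
    (hKK : ∀ i j k, i ≠ j → j ≠ k → i ≠ k → ⁅K i j, K j k⁆ = (2 : ℂ) • K i k)
    (hKh : ∀ i j, i ≠ j → ⁅K i j, h⁆ = 0)
    (hKe : ∀ i j, i ≠ j → ⁅K i j, e j⁆ = (2 : ℂ) • e i)
    (hKf : ∀ i j, i ≠ j → ⁅K i j, f j⁆ = (2 : ℂ) • f i)
    (hKe0 : ∀ i j k, i ≠ j → j ≠ k → i ≠ k → ⁅K i j, e k⁆ = 0)
    (hKf0 : ∀ i j k, i ≠ j → j ≠ k → i ≠ k → ⁅K i j, f k⁆ = 0)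
    (eσ fσ eσc fσc : Fin 4 → Fin 4 → L)
    (heσ : ∀ i j, i ≠ j → eσ i j = ((1 : ℂ)/2) • (e i + Complex.I • e j))
    (hfσ : ∀ i j, i ≠ j → fσ i j = ((1 : ℂ)/2) • (f i - Complex.I • f j))
    (heσc : ∀ i j, i ≠ j → eσc i j = ((1 : ℂ)/2) • (e i - Complex.I • e j))
    (hfσc : ∀ i j, i ≠ j → fσc i j = ((1 : ℂ)/2) • (f i + Complex.I • f j)) :
    ∀ i j k : Fin 4, i ≠ j → j ≠ k → i ≠ k →
      ⁅eσ j k, ⁅fσ j k, e i⁆⁆ = e i :=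
  fun _ _ _ hij hjk hik =>
    stmt10_general hKdef hKe hKe0 (by norm_num) Complex.I_mul_I heσ hfσ hij hjk hik
end

section
/- The elements p₀, …, p_{2g} are pairwise orthogonal idempotents: for all indices i, j ∈ {0, …, 2g}, pⱼ * pᵢ = 0 whenever j ≠ i, and pᵢ * pᵢ = pᵢ. -/
/-!
Left multiplication by `h` is a linear endomorphism of `A`, whose eigenspaces are stable under right
multiplication because `A` is associative. So in `p i = 1 * p i = ∑ j, p j * p i` the `j`-th summand
lies in the `j`-th eigenspace, while the sum lies in the `i`-th. Eigenspaces for distinct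
eigenvalues are independent, hence only the summand `j = i` survives.
-/

theorem eq_zero_of_sum_mem_of_iSupIndep {R M ι : Type*} [Ring R] [AddCommGroup M] [Module R M]
    [Fintype ι] {N : ι → Submodule R M} (hN : iSupIndep N) {x : ι → M} (hx : ∀ j, x j ∈ N j)
    {i j : ι} (hsum : ∑ k, x k ∈ N i) (hji : j ≠ i) : x j = 0 := by
  classical
  have hsingle : ∀ k, (Pi.single i (∑ l, x l) : ι → M) k ∈ N k := by
    intro k
    obtain rfl | hki := eq_or_ne k i
    · rwa [Pi.single_eq_same]
    · rw [Pi.single_eq_of_ne hki]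
      exact (N k).zero_mem
  calc x j = (Pi.single i (∑ k, x k) : ι → M) j :=
        (iSupIndep_iff_finsetSum_eq_imp_eq N).mp hN Finset.univ x _
          (fun k _ ↦ ⟨hx k, hsingle k⟩) (Fintype.sum_pi_single' i _).symm j (Finset.mem_univ j)
    _ = 0 := Pi.single_eq_of_ne hji _

section EigenvectorsOfLeftMultiplication

open Module.End

variable {R A : Type*} [CommRing R] [Ring A] [Algebra R A]

theorem mem_eigenspace_mulLeft_iff {h x : A} {c : R} :
    x ∈ eigenspace (LinearMap.mulLeft R h) c ↔ h * x = c • x := by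
  rw [mem_eigenspace_iff, LinearMap.mulLeft_apply]

theorem mul_mem_eigenspace_mulLeft {h x : A} {c : R}
    (hx : x ∈ eigenspace (LinearMap.mulLeft R h) c) (y : A) :
    x * y ∈ eigenspace (LinearMap.mulLeft R h) c := by
  rw [mem_eigenspace_mulLeft_iff] at hx ⊢
  rw [← mul_assoc, hx, smul_mul_assoc]

theorem stmt14_general [IsDomain R] [Module.IsTorsionFree R A] {ι : Type*} [Fintype ι]
    {h : A} {c : ι → R} (hc : Function.Injective c) {p : ι → A} (hsum : ∑ i, p i = 1)
    (hp : ∀ i, h * p i = c i • p i) : CompleteOrthogonalIdempotents p := by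
  have hmem : ∀ i, p i ∈ eigenspace (LinearMap.mulLeft R h) (c i) :=
    fun i ↦ mem_eigenspace_mulLeft_iff.mpr (hp i)
  have hindep : iSupIndep fun i ↦ eigenspace (LinearMap.mulLeft R h) (c i) :=
    (eigenspaces_iSupIndep _).comp hc
  refine CompleteOrthogonalIdempotents.iff_ortho_complete.mpr ⟨fun j i hji ↦ ?_, hsum⟩
  have hsum_mul : ∑ k, p k * p i = p i := by rw [← Finset.sum_mul, hsum, one_mul]
  exact eq_zero_of_sum_mem_of_iSupIndep hindep
    (fun k ↦ mul_mem_eigenspace_mulLeft (hmem k) (p i)) (hsum_mul.symm ▸ hmem i) hji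

end EigenvectorsOfLeftMultiplication

theorem injective_natCast_fin_sub {R : Type*} [AddGroupWithOne R] [CharZero R] (n : ℕ) (a : R) :
    Function.Injective fun i : Fin n ↦ ((i : ℕ) : R) - a :=
  sub_left_injective.comp (Nat.cast_injective.comp Fin.val_injective)

/-- CONTEXT: an associative unital algebra `A` over `ℚ`, elements `h₀` and
`p 0, …, p (2g)` with `∑ i, p i = 1` and `h₀ * p i = ((i : ℚ) - g) • p i`.
CONCLUSION: the `p i` are pairwise orthogonal idempotents. -/
theorem stmt14 {A : Type*} [Ring A] [Algebra ℚ A] (g : ℕ)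
    (h₀ : A) (p : Fin (2 * g + 1) → A)
    (hsum : ∑ i, p i = 1)
    (hp : ∀ i, h₀ * p i = (((i : ℕ) : ℚ) - (g : ℚ)) • p i) :
    (∀ i j, j ≠ i → p j * p i = 0) ∧ (∀ i, p i * p i = p i) := by
  have h := stmt14_general (injective_natCast_fin_sub _ (g : ℚ)) hsum hp
  exact ⟨fun _ _ hji ↦ h.ortho hji, h.idem⟩
end

section
/- For every index j ∈ {0, …, 2g} one has pⱼ * h₀ = ((j : ℚ) - g) • pⱼ. -/
/-!
Let `L` be left multiplication by `h₀` and `D` the difference of `L` and right multiplication by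
`h₀`. As `D` commutes with `L`, it preserves the eigenspaces of `L`. Since `D` kills
`1 = ∑ i, p i`, the vectors `D (p i)` sum to zero; they lie in eigenspaces of `L` for distinct
eigenvalues, so each of them vanishes, that is, `p i * h₀ = h₀ * p i`.
-/

section Eigenspace

variable {ι R M : Type*} [CommRing R] [IsDomain R] [AddCommGroup M] [Module R M]
  [Module.IsTorsionFree R M] {f : Module.End R M} {v : ι → R} {x : ι → M} {s : Finset ι}

theorem eq_zero_of_mem_eigenspace_of_sum_eq_zero (hv : Function.Injective v)
    (hx : ∀ i ∈ s, x i ∈ f.eigenspace (v i)) (hsum : ∑ i ∈ s, x i = 0) : ∀ i ∈ s, x i = 0 :=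
  (iSupIndep_iff_finsetSum_eq_zero_imp_eq_zero _).mp (f.eigenspaces_iSupIndep.comp hv) s x hx hsum

theorem apply_eq_zero_of_commute_of_apply_sum_eq_zero {d : Module.End R M} (hfd : Commute f d)
    (hv : Function.Injective v) (hx : ∀ i ∈ s, x i ∈ f.eigenspace (v i))
    (hsum : d (∑ i ∈ s, x i) = 0) : ∀ i ∈ s, d (x i) = 0 :=
  eq_zero_of_mem_eigenspace_of_sum_eq_zero hv
    (fun i hi ↦ Module.End.mapsTo_genEigenspace_of_comm hfd (v i) 1 (hx i hi))
    (by rwa [← map_sum])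

end Eigenspace

theorem commute_of_commute_sum_of_mul_eq_smul {ι R A : Type*} [CommRing R] [IsDomain R]
    [NonUnitalRing A] [Module R A] [SMulCommClass R A A] [IsScalarTower R A A]
    [Module.IsTorsionFree R A] {s : Finset ι} {h : A} {p : ι → A} {v : ι → R}
    (hv : Function.Injective v) (hp : ∀ i ∈ s, h * p i = v i • p i)
    (hsum : Commute h (∑ i ∈ s, p i)) : ∀ i ∈ s, Commute h (p i) := by
  let L : Module.End R A := LinearMap.mulLeft R h
  let D : Module.End R A := L - LinearMap.mulRight R h
  have commute_L_D : Commute L D :=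
    (Commute.refl L).sub_right (LinearMap.commute_mulLeft_right h h)
  have mem_eigenspace : ∀ i ∈ s, p i ∈ L.eigenspace (v i) := fun i hi ↦
    Module.End.mem_eigenspace_iff.mpr (hp i hi)
  have D_sum : D (∑ i ∈ s, p i) = 0 := sub_eq_zero.mpr hsum.eq
  exact fun i hi ↦ sub_eq_zero.mp
    (apply_eq_zero_of_commute_of_apply_sum_eq_zero commute_L_D hv mem_eigenspace D_sum i hi)

theorem stmt15_general {ι R A : Type*} [Fintype ι] [CommRing R] [IsDomain R]
    [NonUnitalRing A] [Module R A] [SMulCommClass R A A] [IsScalarTower R A A]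
    [Module.IsTorsionFree R A] {h : A} {p : ι → A} {v : ι → R} (hv : Function.Injective v)
    (hsum : Commute h (∑ i, p i)) (hp : ∀ i, h * p i = v i • p i) (j : ι) :
    p j * h = v j • p j :=
  have commute_h_p : Commute h (p j) :=
    commute_of_commute_sum_of_mul_eq_smul hv (fun i _ ↦ hp i) hsum j (Finset.mem_univ j)
  commute_h_p.eq.symm.trans (hp j)

/-- CONTEXT: an associative unital algebra `A` over `ℚ`, elements `h₀` and
`p 0, …, p (2g)` with `∑ i, p i = 1` and `h₀ * p i = ((i : ℚ) - g) • p i`.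
CONCLUSION: `p j * h₀ = ((j : ℚ) - g) • p j` for every `j`. -/
theorem stmt15 {A : Type*} [Ring A] [Algebra ℚ A] (g : ℕ)
    (h₀ : A) (p : Fin (2 * g + 1) → A)
    (hsum : ∑ i, p i = 1)
    (hp : ∀ i, h₀ * p i = (((i : ℕ) : ℚ) - (g : ℚ)) • p i) :
    ∀ j, p j * h₀ = (((j : ℕ) : ℚ) - (g : ℚ)) • p j :=
  stmt15_general (sub_left_injective.comp (Nat.cast_injective.comp Fin.val_injective))
    (hsum ▸ Commute.one_right h₀) hp
end
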